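/- Let v₀ : ℝ → ℝ² be bounded measurable and α ∈ ℝ² be such that (1/y₁)∫₀^{y₁} (v₀(−z) − α) dz → 0 as |y₁| → ∞. Define v on the upper half-plane by v(y) := ∫_ℝ G(t, y₂) v₀(y₁−t) dt. Then for every integer k ≥ 1 and every δ > 0 there exists C_δ > 0 such that |y₂^k ∂_{y₁}^k v(0, y₂)| ≤ δ + C_δ/y₂ for all y₂ > 0; consequently y₂^k ∂_{y₁}^k v(0, y₂) → 0 as y₂ → ∞. -/

import Mathlib

open MeasureTheory Real Set Filter

noncomputable section

/-- Action of the Stokes Poisson kernel matrix `G(t,y₂)` on a vector `w ∈ ℝ²`. -/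
def Gker (t y₂ : ℝ) (w : ℝ × ℝ) : ℝ × ℝ :=
  (2 * y₂ / (Real.pi * (t ^ 2 + y₂ ^ 2) ^ 2)) •
    (t ^ 2 * w.1 + t * y₂ * w.2, t * y₂ * w.1 + y₂ ^ 2 * w.2)

/-- The operator `∂₁` on vector-valued maps (used for iteration). -/
def pdOp1 (f : ℝ × ℝ → ℝ × ℝ) : ℝ × ℝ → ℝ × ℝ :=
  fun y => fderiv ℝ f y (1, 0)

open scoped Topology ContDiff

/-!
If a kernel `K` is smooth away from `0` and homogeneous of degree `-1`, then `∂₁^k K` is homogeneous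
of degree `-1 - k`, so rescaling `t = y₂ s` gives
`y₂^k ∂₁^k v (0, y₂) = ∫ h(s) v₀(-y₂ s) ds` with `h = (∂₁^k K)(·, 1)`. For `k ≥ 1` the function `h`
is integrable with mean zero, so `v₀` may be replaced by `v₀ - α`. The averages of
`g(z) = v₀(-z) - α` vanish at infinity, hence so do the integrals of its dilates `g(y₂ ·)` over any
fixed interval; as the dilates are uniformly bounded, their integrals against the fixed integrable
`h` also tend to `0`. The bound `δ + C/y₂` combines this limit with the boundedness in `y₂`.
-/

section WeakConvergence

variable {X ι E F : Type*} [MeasurableSpace X] {μ : Measure X}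
  [NormedAddCommGroup E] [NormedSpace ℝ E] [NormedAddCommGroup F] [NormedSpace ℝ F]

lemma integrable_clm_apply_of_bounded {h : X → E →L[ℝ] F} (hh : Integrable h μ) {g : X → E}
    (hg : AEStronglyMeasurable g μ) {M : ℝ} (hM : ∀ x, ‖g x‖ ≤ M) :
    Integrable (fun x => h x (g x)) μ :=
  (ContinuousLinearMap.id ℝ (E →L[ℝ] F)).integrable_of_bilin_of_bdd_right M hh hg (ae_of_all _ hM)

lemma norm_integral_clm_apply_le {h : X → E →L[ℝ] F} (hh : Integrable h μ) {g : X → E} {M : ℝ}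
    (hM : ∀ x, ‖g x‖ ≤ M) : ‖∫ x, h x (g x) ∂μ‖ ≤ M * ∫ x, ‖h x‖ ∂μ := by
  rw [← integral_const_mul]
  refine norm_integral_le_of_norm_le (hh.norm.const_mul M) (ae_of_all _ fun x => ?_)
  rw [mul_comm]
  exact (h x).le_opNorm_of_le (hM x)

variable {l : Filter ι} {M : ℝ}

lemma tendsto_setIntegral_iUnion_zero {κ : Type*} [Countable κ] [CompleteSpace E]
    {g : ι → X → E} (hg : ∀ i, AEStronglyMeasurable (g i) μ) (hM : ∀ i x, ‖g i x‖ ≤ M)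
    {A : κ → Set X} (hA : ∀ k, MeasurableSet (A k)) (hdisj : Pairwise (Function.onFun Disjoint A))
    (hfin : μ (⋃ k, A k) ≠ ⊤)
    (hlim : ∀ k, Tendsto (fun i => ∫ x in A k, g i x ∂μ) l (𝓝 0)) :
    Tendsto (fun i => ∫ x in ⋃ k, A k, g i x ∂μ) l (𝓝 0) := by
  have hsummable : Summable fun k => M * μ.real (A k) :=
    (ENNReal.summable_toReal (by rwa [← measure_iUnion hdisj hA])).mul_left M
  have hsum (i : ι) : ∑' k, ∫ x in A k, g i x ∂μ = ∫ x in ⋃ k, A k, g i x ∂μ :=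
    (hasSum_integral_iUnion hA hdisj <| IntegrableOn.of_bound hfin.lt_top (hg i).restrict M
      (ae_of_all _ (hM i))).tsum_eq
  have hbound (i : ι) (k : κ) : ‖∫ x in A k, g i x ∂μ‖ ≤ M * μ.real (A k) :=
    norm_setIntegral_le_of_norm_le_const
      ((measure_mono (subset_iUnion A k)).trans_lt hfin.lt_top) fun x _ => hM i x
  simpa only [hsum, tsum_zero] using
    tendsto_tsum_of_dominated_convergence hsummable hlim (Eventually.of_forall hbound)

lemma tendsto_setIntegral_inter_Ioc_zero [CompleteSpace E] {g : ι → ℝ → E}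
    (hg : ∀ i, AEStronglyMeasurable (g i)) (hM : ∀ i x, ‖g i x‖ ≤ M)
    (hIoc : ∀ a b, Tendsto (fun i => ∫ x in Ioc a b, g i x) l (𝓝 0))
    {A : Set ℝ} (hA : MeasurableSet A) (a b : ℝ) :
    Tendsto (fun i => ∫ x in A ∩ Ioc a b, g i x) l (𝓝 0) := by
  have hg_int (i : ι) : IntegrableOn (g i) (Ioc a b) :=
    IntegrableOn.of_bound measure_Ioc_lt_top (hg i).restrict M (ae_of_all _ (hM i))
  induction A, hA using MeasurableSpace.induction_on_inter
    (BorelSpace.measurable_eq.trans (borel_eq_generateFrom_Iic ℝ)) isPiSystem_Iic with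
  | empty => simpa only [empty_inter, setIntegral_empty] using tendsto_const_nhds
  | basic t ht =>
    obtain ⟨c, rfl⟩ := ht
    rw [inter_comm, Ioc_inter_Iic]
    exact hIoc a (b ⊓ c)
  | compl A hA ih =>
    have hdiff (i : ι) : ∫ x in Aᶜ ∩ Ioc a b, g i x
        = (∫ x in Ioc a b, g i x) - ∫ x in A ∩ Ioc a b, g i x := by
      rw [← setIntegral_sdiff (hA.inter measurableSet_Ioc) (hg_int i) inter_subset_right,
        sdiff_inter_self_eq_sdiff, sdiff_eq_compl_inter]
    simpa only [hdiff, sub_zero] using (hIoc a b).sub ih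
  | iUnion A hdisj hA ih =>
    rw [iUnion_inter]
    refine tendsto_setIntegral_iUnion_zero hg hM (fun n => (hA n).inter measurableSet_Ioc)
      (fun m n hmn => (hdisj hmn).mono inter_subset_left inter_subset_left) ?_ ih
    exact measure_ne_top_of_subset (iUnion_subset fun n => inter_subset_right)
      measure_Ioc_lt_top.ne

lemma tendsto_setIntegral_zero_of_forall_Ioc [CompleteSpace E] {g : ι → ℝ → E}
    (hg : ∀ i, AEStronglyMeasurable (g i)) (hM : ∀ i x, ‖g i x‖ ≤ M)
    (hIoc : ∀ a b, Tendsto (fun i => ∫ x in Ioc a b, g i x) l (𝓝 0))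
    {A : Set ℝ} (hA : MeasurableSet A) (hfin : volume A ≠ ⊤) :
    Tendsto (fun i => ∫ x in A, g i x) l (𝓝 0) := by
  have hunion : ⋃ n : ℤ, A ∩ Ioc (n : ℝ) (n + 1) = A := by
    rw [← inter_iUnion, iUnion_Ioc_intCast, inter_univ]
  rw [← hunion]
  exact tendsto_setIntegral_iUnion_zero hg hM (fun n => hA.inter measurableSet_Ioc)
    (fun m n hmn => (pairwise_disjoint_Ioc_intCast ℝ hmn).mono inter_subset_right
      inter_subset_right) (by rwa [hunion])
    fun n => tendsto_setIntegral_inter_Ioc_zero hg hM hIoc hA n (n + 1)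

lemma isClosed_setOf_tendsto_integral_clm_apply {g : ι → X → E}
    (hg : ∀ i, AEStronglyMeasurable (g i) μ) (hM : ∀ i x, ‖g i x‖ ≤ M) :
    IsClosed {h : X →₁[μ] E →L[ℝ] F | Tendsto (fun i => ∫ x, h x (g i x) ∂μ) l (𝓝 0)} := by
  have hlip (i : ι) : LipschitzWith M.toNNReal
      fun h : X →₁[μ] E →L[ℝ] F => ∫ x, h x (g i x) ∂μ := by
    refine LipschitzWith.of_dist_le_mul fun h₁ h₂ => ?_
    have hh_int (h : X →₁[μ] E →L[ℝ] F) : Integrable (fun x => h x (g i x)) μ :=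
      integrable_clm_apply_of_bounded (L1.integrable_coeFn h) (hg i) (hM i)
    have hsub : (∫ x, h₁ x (g i x) ∂μ) - ∫ x, h₂ x (g i x) ∂μ = ∫ x, (h₁ - h₂) x (g i x) ∂μ := by
      rw [← integral_sub (hh_int h₁) (hh_int h₂)]
      refine integral_congr_ae ?_
      filter_upwards [Lp.coeFn_sub h₁ h₂] with x hx
      simp only [hx, Pi.sub_apply, sub_apply]
    rw [dist_eq_norm, dist_eq_norm, hsub, L1.norm_eq_integral_norm]
    refine (norm_integral_clm_apply_le (L1.integrable_coeFn _) (hM i)).trans ?_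
    gcongr
    exact le_coe_toNNReal M
  exact (LipschitzWith.uniformEquicontinuous _ _ hlip).equicontinuous.isClosed_setOfPred_tendsto
    continuous_const

theorem tendsto_integral_clm_apply_zero_of_forall_Ioc [CompleteSpace E] [CompleteSpace F]
    {g : ι → ℝ → E} (hg : ∀ i, AEStronglyMeasurable (g i)) (hM : ∀ i x, ‖g i x‖ ≤ M)
    (hIoc : ∀ a b, Tendsto (fun i => ∫ x in Ioc a b, g i x) l (𝓝 0))
    {h : ℝ → E →L[ℝ] F} (hh : Integrable h) :
    Tendsto (fun i => ∫ x, h x (g i x)) l (𝓝 0) := by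
  refine Integrable.induction (P := fun h : ℝ → E →L[ℝ] F =>
    Tendsto (fun i => ∫ x, h x (g i x)) l (𝓝 0)) (fun L A hA hfin => ?_)
    (fun h₁ h₂ _ hh₁ hh₂ ih₁ ih₂ => ?_) (isClosed_setOf_tendsto_integral_clm_apply hg hM)
    (fun h₁ h₂ heq _ ih => ?_) hh
  · have hL (i : ι) : ∫ x, A.indicator (fun _ => L) x (g i x) = L (∫ x in A, g i x) := by
      rw [← L.integral_comp_comm (IntegrableOn.of_bound hfin (hg i).restrict M
        (ae_of_all _ (hM i))), ← integral_indicator hA]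
      refine integral_congr_ae (ae_of_all _ fun x => ?_)
      by_cases hx : x ∈ A <;> simp [hx]
    simpa only [hL, map_zero, Function.comp_def] using (L.continuous.tendsto 0).comp
      (tendsto_setIntegral_zero_of_forall_Ioc hg hM hIoc hA hfin.ne)
  · have hadd (i : ι) : ∫ x, (h₁ + h₂) x (g i x) = (∫ x, h₁ x (g i x)) + ∫ x, h₂ x (g i x) :=
      integral_add (integrable_clm_apply_of_bounded hh₁ (hg i) (hM i))
        (integrable_clm_apply_of_bounded hh₂ (hg i) (hM i))
    simpa only [hadd, add_zero] using ih₁.add ih₂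
  · refine ih.congr fun i => integral_congr_ae ?_
    filter_upwards [heq] with x hx using by rw [hx]

lemma tendsto_intervalIntegral_comp_mul_zero {f : ℝ → E}
    (havg : Tendsto (fun x : ℝ => (1 / x) • ∫ z in (0 : ℝ)..x, f z) (atBot ⊔ atTop) (𝓝 0))
    (b : ℝ) : Tendsto (fun y : ℝ => ∫ s in (0 : ℝ)..b, f (y * s)) atTop (𝓝 0) := by
  rcases eq_or_ne b 0 with rfl | hb
  · simp
  have hyb : Tendsto (fun y : ℝ => y * b) atTop (atBot ⊔ atTop) := by
    rcases hb.lt_or_gt with hb | hb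
    · exact (tendsto_id.atTop_mul_const_of_neg hb).mono_right le_sup_left
    · exact (tendsto_id.atTop_mul_const hb).mono_right le_sup_right
  have hlim := (havg.comp hyb).const_smul b
  rw [smul_zero] at hlim
  refine hlim.congr' ?_
  filter_upwards [eventually_gt_atTop 0] with y hy
  rw [Function.comp_apply, intervalIntegral.integral_comp_mul_left f hy.ne', mul_zero, smul_smul]
  congr 1
  field_simp

theorem tendsto_integral_clm_apply_comp_mul_zero [CompleteSpace E] [CompleteSpace F] {f : ℝ → E}
    (hf : StronglyMeasurable f) (hM : ∀ z, ‖f z‖ ≤ M)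
    (havg : Tendsto (fun x : ℝ => (1 / x) • ∫ z in (0 : ℝ)..x, f z) (atBot ⊔ atTop) (𝓝 0))
    {h : ℝ → E →L[ℝ] F} (hh : Integrable h) :
    Tendsto (fun y : ℝ => ∫ s, h s (f (y * s))) atTop (𝓝 0) := by
  have hmeas (y : ℝ) : StronglyMeasurable fun s => f (y * s) :=
    hf.comp_measurable (measurable_const_mul y)
  refine tendsto_integral_clm_apply_zero_of_forall_Ioc (fun y => (hmeas y).aestronglyMeasurable)
    (fun y s => hM (y * s)) (fun a b => ?_) hh
  wlog hab : a ≤ b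
  · simp [Ioc_eq_empty_of_le (le_of_not_ge hab)]
  have hg_int (y a b : ℝ) : IntervalIntegrable (fun s => f (y * s)) volume a b :=
    (intervalIntegrable_const (c := M)).mono_fun (hmeas y).aestronglyMeasurable
      (ae_of_all _ fun s => (hM (y * s)).trans (le_abs_self M))
  have hsub (y : ℝ) : ∫ s in Ioc a b, f (y * s)
      = (∫ s in (0 : ℝ)..b, f (y * s)) - ∫ s in (0 : ℝ)..a, f (y * s) := by
    rw [intervalIntegral.integral_interval_sub_left (hg_int y 0 b) (hg_int y 0 a),
      intervalIntegral.integral_of_le hab]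
  simpa only [hsub, sub_zero] using (tendsto_intervalIntegral_comp_mul_zero havg b).sub
    (tendsto_intervalIntegral_comp_mul_zero havg a)

end WeakConvergence

lemma exists_forall_norm_le_add_div {F : Type*} [NormedAddCommGroup F] {g : ℝ → F} {B : ℝ}
    (hB : ∀ y, 0 < y → ‖g y‖ ≤ B) (hg : Tendsto g atTop (𝓝 0)) {δ : ℝ} (hδ : 0 < δ) :
    ∃ C > 0, ∀ y, 0 < y → ‖g y‖ ≤ δ + C / y := by
  obtain ⟨Y, hY⟩ := eventually_atTop.1
    ((tendsto_zero_iff_norm_tendsto_zero.1 hg).eventually_le_const hδ)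
  refine ⟨|B| * |Y| + 1, by positivity, fun y hy => ?_⟩
  rcases le_or_gt Y y with hYy | hyY
  · exact (hY y hYy).trans (le_add_of_nonneg_right (by positivity))
  · have hB_le : |B| ≤ (|B| * |Y| + 1) / y := by
      rw [le_div_iff₀ hy]
      nlinarith [abs_nonneg B, le_abs_self Y]
    linarith [hB y hy, le_abs_self B]

/-- A kernel on a normed space that is smooth away from the origin and positively homogeneous of
degree `-n`. The second condition includes the origin, where it says `K 0 = 0` if `n ≠ 0`. -/
structure IsHomogeneousKernel {V F : Type*} [NormedAddCommGroup V] [NormedSpace ℝ V]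
    [NormedAddCommGroup F] [NormedSpace ℝ F] (n : ℕ) (K : V → F) : Prop where
  contDiffOn : ContDiffOn ℝ ∞ K {0}ᶜ
  map_smul : ∀ r : ℝ, 0 < r → ∀ z, K (r • z) = (r ^ n)⁻¹ • K z

/-- The derivative `∂₁ f` along the boundary of the half-plane, for `f` with values in an arbitrary
normed space (`pdOp1` is the case `F = ℝ × ℝ`). -/
def tangentialDeriv {F : Type*} [NormedAddCommGroup F] [NormedSpace ℝ F] (f : ℝ × ℝ → F) :
    ℝ × ℝ → F :=
  fun y => fderiv ℝ f y (1, 0)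

namespace IsHomogeneousKernel

section NormedSpace

variable {V F H : Type*} [NormedAddCommGroup V] [NormedSpace ℝ V]
  [NormedAddCommGroup F] [NormedSpace ℝ F] [NormedAddCommGroup H] [NormedSpace ℝ H]
  {n : ℕ} {K : V → F}

lemma differentiableAt (hK : IsHomogeneousKernel n K) {z : V} (hz : z ≠ 0) :
    DifferentiableAt ℝ K z :=
  (hK.contDiffOn.contDiffAt (isOpen_compl_singleton.mem_nhds hz)).differentiableAt (by simp)

lemma exists_norm_le [FiniteDimensional ℝ V] (hK : IsHomogeneousKernel n K) :
    ∃ C, ∀ z ≠ 0, ‖K z‖ ≤ C * (‖z‖ ^ n)⁻¹ := by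
  have : ProperSpace V := FiniteDimensional.proper_real V
  have hcont : ContinuousOn K (Metric.sphere 0 1) :=
    hK.contDiffOn.continuousOn.mono fun z hz => ne_zero_of_mem_unit_sphere ⟨z, hz⟩
  obtain ⟨C, hC⟩ := (isCompact_sphere (0 : V) 1).exists_bound_of_continuousOn hcont
  refine ⟨C, fun z hz => ?_⟩
  have hnorm : 0 < ‖z‖ := norm_pos_iff.2 hz
  have hsphere : ‖z‖⁻¹ • z ∈ Metric.sphere (0 : V) 1 := by
    rw [mem_sphere_zero_iff_norm, norm_smul, norm_inv, norm_norm, inv_mul_cancel₀ hnorm.ne']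
  calc ‖K z‖ = ‖K (‖z‖ • ‖z‖⁻¹ • z)‖ := by rw [smul_inv_smul₀ hnorm.ne']
    _ = (‖z‖ ^ n)⁻¹ * ‖K (‖z‖⁻¹ • z)‖ := by
      rw [hK.map_smul _ hnorm, norm_smul, norm_inv, norm_pow, norm_norm]
    _ ≤ (‖z‖ ^ n)⁻¹ * C := by gcongr; exact hC _ hsphere
    _ = C * (‖z‖ ^ n)⁻¹ := mul_comm _ _

lemma clm_comp (L : F →L[ℝ] H) (hK : IsHomogeneousKernel n K) :
    IsHomogeneousKernel n fun z => L (K z) where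
  contDiffOn := L.contDiff.comp_contDiffOn hK.contDiffOn
  map_smul r hr z := by rw [hK.map_smul r hr, L.map_smul]

lemma clm_smul (L : V →L[ℝ] ℝ) (hK : IsHomogeneousKernel (n + 1) K) :
    IsHomogeneousKernel n fun z => L z • K z where
  contDiffOn := L.contDiff.contDiffOn.smul hK.contDiffOn
  map_smul r hr z := by
    rw [hK.map_smul r hr, L.map_smul, smul_smul, smul_smul, smul_eq_mul]
    congr 1
    field_simp
    ring

protected lemma fderiv (hK : IsHomogeneousKernel n K) :
    IsHomogeneousKernel (n + 1) (fderiv ℝ K) where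
  contDiffOn := hK.contDiffOn.fderiv_of_isOpen isOpen_compl_singleton (by simp)
  map_smul r hr z := by
    have hscale : r • fderiv ℝ K (r • z) = (r ^ n)⁻¹ • fderiv ℝ K z := by
      rw [← fderiv_comp_smul, funext (hK.map_smul r hr)]
      exact congrFun (fderiv_const_smul_field _) z
    rw [pow_succ', mul_inv, mul_smul, ← hscale, inv_smul_smul₀ hr.ne']

end NormedSpace

variable {F : Type*} [NormedAddCommGroup F] [NormedSpace ℝ F] {n : ℕ} {K : ℝ × ℝ → F}

protected lemma tangentialDeriv (hK : IsHomogeneousKernel n K) :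
    IsHomogeneousKernel (n + 1) (tangentialDeriv K) :=
  hK.fderiv.clm_comp (ContinuousLinearMap.apply ℝ F (1, 0))

lemma iterate_tangentialDeriv (hK : IsHomogeneousKernel n K) (k : ℕ) :
    IsHomogeneousKernel (n + k) (tangentialDeriv^[k] K) := by
  induction k with
  | zero => exact hK
  | succ k ih =>
    rw [Function.iterate_succ_apply']
    exact ih.tangentialDeriv

end IsHomogeneousKernel

section HalfPlane

lemma mk_ne_zero_of_pos {x y : ℝ} (hy : 0 < y) : ((x, y) : ℝ × ℝ) ≠ 0 :=
  fun h => hy.ne' (congrArg Prod.snd h)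

lemma integrable_inv_norm_mk_pow {n : ℕ} (hn : 2 ≤ n) {y : ℝ} (hy : 0 < y) :
    Integrable fun t : ℝ => (‖(t, y)‖ ^ n)⁻¹ := by
  have hrpow : Integrable fun t : ℝ => (1 + ‖t‖) ^ (-(n : ℝ)) :=
    integrable_one_add_norm (by rw [Module.finrank_self]; exact_mod_cast hn)
  refine (hrpow.const_mul ((1 / y + 1) ^ n)).mono' (by fun_prop) (ae_of_all _ fun t => ?_)
  have hnorm : 0 < ‖(t, y)‖ := norm_pos_iff.2 (mk_ne_zero_of_pos hy)
  have hle : 1 + ‖t‖ ≤ (1 / y + 1) * ‖(t, y)‖ := by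
    have hy_le : y ≤ ‖(t, y)‖ := (le_abs_self y).trans (norm_snd_le (t, y))
    calc 1 + ‖t‖ = 1 / y * y + ‖t‖ := by rw [one_div_mul_cancel hy.ne']
      _ ≤ 1 / y * ‖(t, y)‖ + ‖(t, y)‖ := by gcongr; exact norm_fst_le (t, y)
      _ = (1 / y + 1) * ‖(t, y)‖ := by ring
  rw [rpow_neg (by positivity), rpow_natCast, norm_inv, norm_pow, norm_norm,
    ← div_eq_mul_inv, le_div_iff₀ (by positivity), inv_mul_le_iff₀ (by positivity), mul_comm,
    ← mul_pow]
  gcongr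

namespace IsHomogeneousKernel

variable {F : Type*} [NormedAddCommGroup F] [NormedSpace ℝ F] {n : ℕ} {K : ℝ × ℝ → F}

lemma continuous_mk (hK : IsHomogeneousKernel n K) {y : ℝ} (hy : 0 < y) :
    Continuous fun t => K (t, y) :=
  hK.contDiffOn.continuousOn.comp_continuous (by fun_prop) fun _ => mk_ne_zero_of_pos hy

lemma integrable_mk (hK : IsHomogeneousKernel n K) (hn : 2 ≤ n) {y : ℝ} (hy : 0 < y) :
    Integrable fun t => K (t, y) := by
  obtain ⟨C, hC⟩ := hK.exists_norm_le
  exact ((integrable_inv_norm_mk_pow hn hy).const_mul C).mono'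
    (hK.continuous_mk hy).aestronglyMeasurable (ae_of_all _ fun t => hC _ (mk_ne_zero_of_pos hy))

lemma tendsto_mk_cocompact (hK : IsHomogeneousKernel n K) (hn : n ≠ 0) {y : ℝ} (hy : 0 < y) :
    Tendsto (fun t => K (t, y)) (cocompact ℝ) (𝓝 0) := by
  obtain ⟨C, hC⟩ := hK.exists_norm_le
  have hnorm : Tendsto (fun t : ℝ => ‖(t, y)‖) (cocompact ℝ) atTop :=
    tendsto_atTop_mono (fun t => norm_fst_le (t, y)) tendsto_norm_cocompact_atTop
  have hdecay := ((tendsto_pow_atTop hn).comp hnorm).inv_tendsto_atTop.const_mul C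
  rw [mul_zero] at hdecay
  exact squeeze_zero_norm (fun t => hC _ (mk_ne_zero_of_pos hy)) hdecay

lemma integral_tangentialDeriv_mk [CompleteSpace F] (hK : IsHomogeneousKernel n K) (hn : n ≠ 0)
    {y : ℝ} (hy : 0 < y) : ∫ t, tangentialDeriv K (t, y) = 0 := by
  have hderiv (t : ℝ) : HasDerivAt (fun t => K (t, y)) (tangentialDeriv K (t, y)) t :=
    (hK.differentiableAt (mk_ne_zero_of_pos hy)).hasFDerivAt.comp_hasDerivAt t
      ((hasDerivAt_id t).prodMk (hasDerivAt_const t y))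
  have hlim := hK.tendsto_mk_cocompact hn hy
  rw [integral_of_hasDerivAt_of_tendsto hderiv (hK.tangentialDeriv.integrable_mk (by lia) hy)
    (hlim.mono_left atBot_le_cocompact) (hlim.mono_left atTop_le_cocompact), sub_zero]

end IsHomogeneousKernel

lemma tangentialDeriv_eqOn {F : Type*} [NormedAddCommGroup F] [NormedSpace ℝ F] {f g : ℝ × ℝ → F}
    {U : Set (ℝ × ℝ)} (hU : IsOpen U) (hfg : EqOn f g U) :
    EqOn (tangentialDeriv f) (tangentialDeriv g) U := fun _ hq => by
  rw [tangentialDeriv, (hfg.eventuallyEq_of_mem (hU.mem_nhds hq)).fderiv_eq, tangentialDeriv]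

variable {E F : Type*} [NormedAddCommGroup E] [NormedSpace ℝ E]
  [NormedAddCommGroup F] [NormedSpace ℝ F]

/-- The extension of the boundary data `f` to the half-plane with Poisson kernel `K`: at height
`q.2`, the convolution of `K (·, q.2)` with `f`. -/
def poissonIntegral (K : ℝ × ℝ → E →L[ℝ] F) (f : ℝ → E) (q : ℝ × ℝ) : F :=
  ∫ t, K (t, q.2) (f (q.1 - t))

lemma poissonIntegral_eq_integral_sub (K : ℝ × ℝ → E →L[ℝ] F) (f : ℝ → E) (q : ℝ × ℝ) :
    poissonIntegral K f q = ∫ s, K (q.1 - s, q.2) (f s) := by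
  rw [poissonIntegral, ← integral_sub_left_eq_self _ volume q.1]
  simp only [sub_sub_cancel]

lemma snd_pos_of_mem_ball {p q : ℝ × ℝ} (hp : p ∈ Metric.ball q q.2) : 0 < p.2 := by
  rw [mem_ball_iff_norm'] at hp
  linarith [(le_abs_self _).trans_lt ((norm_snd_le (q - p)).trans_lt hp), Prod.snd_sub q p]

lemma half_norm_le_norm_of_mem_ball {p q : ℝ × ℝ} (hp : p ∈ Metric.ball q (q.2 / 2)) (s : ℝ) :
    ‖(q.1 - s, q.2)‖ / 2 ≤ ‖(p.1 - s, p.2)‖ := by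
  have htri := norm_le_norm_sub_add (q.1 - s, q.2) (p.1 - s, p.2)
  rw [Prod.mk_sub_mk, sub_sub_sub_cancel_right] at htri
  have hq : q.2 ≤ ‖(q.1 - s, q.2)‖ := (le_abs_self _).trans (norm_snd_le (q.1 - s, q.2))
  have hqp : ‖(q.1 - p.1, q.2 - p.2)‖ < q.2 / 2 := mem_ball_iff_norm'.1 hp
  linarith

variable {n : ℕ} {K : ℝ × ℝ → E →L[ℝ] F} {f : ℝ → E} {M : ℝ}

lemma IsHomogeneousKernel.fderiv_flip (hK : IsHomogeneousKernel n K) :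
    IsHomogeneousKernel (n + 1) fun z => (fderiv ℝ K z).flip :=
  hK.fderiv.clm_comp (H := E →L[ℝ] ℝ × ℝ →L[ℝ] F)
    (ContinuousLinearMap.flipₗᵢ ℝ (ℝ × ℝ) E F).toContinuousLinearEquiv.toContinuousLinearMap

lemma IsHomogeneousKernel.hasFDerivAt_apply_mk_sub (hK : IsHomogeneousKernel n K) {q : ℝ × ℝ}
    (hq : 0 < q.2) (s : ℝ) (w : E) :
    HasFDerivAt (fun p : ℝ × ℝ => K (p.1 - s, p.2) w)
      ((fderiv ℝ K (q.1 - s, q.2)).flip w) q := by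
  have hshift : HasFDerivAt (fun p : ℝ × ℝ => (p.1 - s, p.2)) (.id ℝ (ℝ × ℝ)) q :=
    ((hasFDerivAt_fst.sub_const s).prodMk hasFDerivAt_snd).congr_fderiv (by ext <;> simp)
  have hK' := (hK.differentiableAt (mk_ne_zero_of_pos (x := q.1 - s) hq)).hasFDerivAt
  exact (hK'.comp q hshift).clm_apply (hasFDerivAt_const w q) |>.congr_fderiv (by ext <;> simp)

lemma IsHomogeneousKernel.aestronglyMeasurable_apply_mk_sub (hK : IsHomogeneousKernel n K)
    (hf : AEStronglyMeasurable f) {q : ℝ × ℝ} (hq : 0 < q.2) :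
    AEStronglyMeasurable fun s => K (q.1 - s, q.2) (f s) :=
  (ContinuousLinearMap.id ℝ (E →L[ℝ] F)).aestronglyMeasurable_comp₂
    ((hK.continuous_mk hq).comp (continuous_const.sub continuous_id)).aestronglyMeasurable hf

theorem hasFDerivAt_poissonIntegral (hK : IsHomogeneousKernel n K) (hn : n ≠ 0)
    (hf : AEStronglyMeasurable f) (hM : ∀ s, ‖f s‖ ≤ M) {q : ℝ × ℝ} (hq : 0 < q.2)
    (hK_int : Integrable fun t => K (t, q.2)) :
    HasFDerivAt (poissonIntegral K f) (poissonIntegral (fun z => (fderiv ℝ K z).flip) f q) q := by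
  obtain ⟨C, hC⟩ := hK.fderiv_flip.exists_norm_le
  have hpos {p : ℝ × ℝ} (hp : p ∈ Metric.ball q (q.2 / 2)) : 0 < p.2 :=
    snd_pos_of_mem_ball (Metric.ball_subset_ball (half_le_self hq.le) hp)
  have hbound (s : ℝ) {p : ℝ × ℝ} (hp : p ∈ Metric.ball q (q.2 / 2)) :
      ‖(fderiv ℝ K (p.1 - s, p.2)).flip (f s)‖
        ≤ |C| * ((‖(q.1 - s, q.2)‖ / 2) ^ (n + 1))⁻¹ * M := by
    refine ContinuousLinearMap.le_of_opNorm_le_of_le _ ?_ (hM s)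
    calc ‖(fderiv ℝ K (p.1 - s, p.2)).flip‖ ≤ C * (‖(p.1 - s, p.2)‖ ^ (n + 1))⁻¹ :=
          hC _ (mk_ne_zero_of_pos (hpos hp))
      _ ≤ |C| * ((‖(q.1 - s, q.2)‖ / 2) ^ (n + 1))⁻¹ := by
        have : 0 < ‖(q.1 - s, q.2)‖ := norm_pos_iff.2 (mk_ne_zero_of_pos hq)
        gcongr
        · exact le_abs_self C
        · exact half_norm_le_norm_of_mem_ball hp s
  have hbound_int : Integrable fun s => |C| * ((‖(q.1 - s, q.2)‖ / 2) ^ (n + 1))⁻¹ * M := by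
    have hdecay := (integrable_inv_norm_mk_pow (n := n + 1) (by lia) hq).comp_sub_left q.1
    simp_rw [div_pow, inv_div, div_eq_mul_inv]
    exact ((hdecay.const_mul _).const_mul _).mul_const _
  rw [funext (poissonIntegral_eq_integral_sub K f), poissonIntegral_eq_integral_sub]
  have hball : Metric.ball q (q.2 / 2) ∈ 𝓝 q := Metric.ball_mem_nhds q (half_pos hq)
  exact hasFDerivAt_integral_of_dominated_of_fderiv_le (𝕜 := ℝ) hball
    (eventually_of_mem hball fun p hp => hK.aestronglyMeasurable_apply_mk_sub hf (hpos hp))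
    (integrable_clm_apply_of_bounded (hK_int.comp_sub_left q.1) hf hM)
    (hK.fderiv_flip.aestronglyMeasurable_apply_mk_sub hf hq)
    (ae_of_all _ fun s p hp => hbound s hp) hbound_int
    (ae_of_all _ fun s p hp => hK.hasFDerivAt_apply_mk_sub (hpos hp) s (f s))

lemma tangentialDeriv_poissonIntegral (hK : IsHomogeneousKernel n K) (hn : n ≠ 0)
    (hf : AEStronglyMeasurable f) (hM : ∀ s, ‖f s‖ ≤ M) {q : ℝ × ℝ} (hq : 0 < q.2)
    (hK_int : Integrable fun t => K (t, q.2)) :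
    tangentialDeriv (poissonIntegral K f) q = poissonIntegral (tangentialDeriv K) f q := by
  have hflip : Integrable fun s => (fderiv ℝ K (q.1 - s, q.2)).flip (f s) :=
    integrable_clm_apply_of_bounded
      ((hK.fderiv_flip.integrable_mk (by lia) hq).comp_sub_left q.1) hf hM
  rw [tangentialDeriv, (hasFDerivAt_poissonIntegral hK hn hf hM hq hK_int).fderiv,
    poissonIntegral_eq_integral_sub, poissonIntegral_eq_integral_sub,
    ContinuousLinearMap.integral_apply hflip]
  rfl

theorem iterate_tangentialDeriv_eqOn_poissonIntegral {v : ℝ × ℝ → F}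
    (hK : IsHomogeneousKernel n K) (hn : n ≠ 0) (hf : AEStronglyMeasurable f)
    (hM : ∀ s, ‖f s‖ ≤ M) (hK_int : ∀ y, 0 < y → Integrable fun t => K (t, y))
    (hv : EqOn v (poissonIntegral K f) {q | 0 < q.2}) (k : ℕ) :
    EqOn (tangentialDeriv^[k] v) (poissonIntegral (tangentialDeriv^[k] K) f) {q | 0 < q.2} := by
  induction k with
  | zero => exact hv
  | succ k ih =>
    have hKk_int {y : ℝ} (hy : 0 < y) : Integrable fun t => tangentialDeriv^[k] K (t, y) := by
      rcases eq_or_ne k 0 with rfl | hk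
      · exact hK_int y hy
      · exact (hK.iterate_tangentialDeriv k).integrable_mk (by lia) hy
    intro q hq
    rw [Function.iterate_succ_apply', Function.iterate_succ_apply',
      tangentialDeriv_eqOn (isOpen_lt continuous_const continuous_snd) ih hq]
    exact tangentialDeriv_poissonIntegral (hK.iterate_tangentialDeriv k) (by lia) hf hM hq
      (hKk_int hq)

lemma pow_smul_poissonIntegral (hK : IsHomogeneousKernel (n + 1) K) (f : ℝ → E) {y : ℝ}
    (hy : 0 < y) : y ^ n • poissonIntegral K f (0, y) = ∫ s, K (s, 1) (f (-(y * s))) := by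
  have hscale (s : ℝ) : K (y * s, y) = (y ^ (n + 1))⁻¹ • K (s, 1) := by
    rw [← hK.map_smul y hy, Prod.smul_mk, smul_eq_mul, smul_eq_mul, mul_one]
  have hsubst : ∫ s, K (y * s, y) (f (-(y * s))) = y⁻¹ • poissonIntegral K f (0, y) := by
    rw [Measure.integral_comp_mul_left (fun t => K (t, y) (f (-t))) y,
      abs_of_pos (inv_pos.2 hy), poissonIntegral]
    simp only [zero_sub]
  simp only [hscale, smul_apply, integral_smul] at hsubst
  rw [inv_smul_eq_iff₀ (pow_pos hy _).ne', smul_smul, pow_succ,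
    mul_inv_cancel_right₀ hy.ne'] at hsubst
  exact hsubst.symm

lemma poissonIntegral_sub_const_of_integral_eq_zero (hf : AEStronglyMeasurable f)
    (hM : ∀ s, ‖f s‖ ≤ M) {q : ℝ × ℝ} (hK_int : Integrable fun t => K (t, q.2))
    (hmean : ∫ t, K (t, q.2) = 0) (α : E) :
    poissonIntegral K (fun s => f s - α) q = poissonIntegral K f q := by
  have hshift : Integrable fun s => K (q.1 - s, q.2) := hK_int.comp_sub_left q.1
  have hα : ∫ s, K (q.1 - s, q.2) α = 0 := by
    rw [← ContinuousLinearMap.integral_apply hshift,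
      integral_sub_left_eq_self (fun t => K (t, q.2)), hmean, zero_apply]
  simp only [poissonIntegral_eq_integral_sub, map_sub]
  rw [integral_sub (integrable_clm_apply_of_bounded hshift hf hM)
    (hshift.apply_continuousLinearMap α), hα, sub_zero]

lemma pow_smul_iterate_tangentialDeriv_eq_integral [CompleteSpace F] {v : ℝ × ℝ → F}
    (hK : IsHomogeneousKernel 1 K) (hK_int : ∀ y, 0 < y → Integrable fun t => K (t, y))
    (hf : AEStronglyMeasurable f) (hM : ∀ s, ‖f s‖ ≤ M)
    (hv : EqOn v (poissonIntegral K f) {q | 0 < q.2}) (α : E) {k : ℕ} (hk : k ≠ 0) {y : ℝ}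
    (hy : 0 < y) :
    y ^ k • (tangentialDeriv^[k] v) (0, y)
      = ∫ s, tangentialDeriv^[k] K (s, 1) (f (-(y * s)) - α) := by
  have hKk : IsHomogeneousKernel (k + 1) (tangentialDeriv^[k] K) := by
    simpa only [add_comm] using hK.iterate_tangentialDeriv k
  have hmean : ∫ t, tangentialDeriv^[k] K (t, y) = 0 := by
    obtain ⟨m, rfl⟩ := Nat.exists_eq_succ_of_ne_zero hk
    rw [Function.iterate_succ_apply']
    exact (hK.iterate_tangentialDeriv m).integral_tangentialDeriv_mk (by lia) hy
  rw [iterate_tangentialDeriv_eqOn_poissonIntegral hK one_ne_zero hf hM hK_int hv _ hy,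
    ← poissonIntegral_sub_const_of_integral_eq_zero hf hM (hKk.integrable_mk (by lia) hy) hmean α,
    pow_smul_poissonIntegral hKk _ hy]

end HalfPlane

theorem stmt15_general {E F : Type*} [NormedAddCommGroup E] [NormedSpace ℝ E] [CompleteSpace E]
    [NormedAddCommGroup F] [NormedSpace ℝ F] [CompleteSpace F] {K : ℝ × ℝ → E →L[ℝ] F}
    (hK : IsHomogeneousKernel 1 K) (hK_int : ∀ y, 0 < y → Integrable fun t => K (t, y))
    {v₀ : ℝ → E} (hmeas : StronglyMeasurable v₀) (hbd : ∃ C : ℝ, ∀ t, ‖v₀ t‖ ≤ C) {α : E}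
    (havg : Tendsto (fun y₁ : ℝ => (1 / y₁) • ∫ z in (0 : ℝ)..y₁, (v₀ (-z) - α))
      (atBot ⊔ atTop) (𝓝 0))
    {v : ℝ × ℝ → F} (hv : ∀ y : ℝ × ℝ, 0 < y.2 → v y = ∫ t, K (t, y.2) (v₀ (y.1 - t)))
    {k : ℕ} (hk : 1 ≤ k) :
    (∀ δ > 0, ∃ C > 0, ∀ y₂ : ℝ, 0 < y₂ →
      ‖y₂ ^ k • (tangentialDeriv^[k] v) (0, y₂)‖ ≤ δ + C / y₂) ∧
    Tendsto (fun y₂ : ℝ => y₂ ^ k • (tangentialDeriv^[k] v) (0, y₂)) atTop (𝓝 0) := by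
  obtain ⟨M, hM⟩ := hbd
  have hrepr {y : ℝ} (hy : 0 < y) : y ^ k • (tangentialDeriv^[k] v) (0, y)
      = ∫ s, tangentialDeriv^[k] K (s, 1) (v₀ (-(y * s)) - α) :=
    pow_smul_iterate_tangentialDeriv_eq_integral hK hK_int hmeas.aestronglyMeasurable hM hv α
      (by lia) hy
  have hKk : Integrable fun s => tangentialDeriv^[k] K (s, 1) :=
    (hK.iterate_tangentialDeriv k).integrable_mk (by lia) one_pos
  have hg_meas : StronglyMeasurable fun z => v₀ (-z) - α :=
    (hmeas.comp_measurable measurable_neg).sub stronglyMeasurable_const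
  have hg_le (z : ℝ) : ‖v₀ (-z) - α‖ ≤ M + ‖α‖ := norm_sub_le_of_le (hM (-z)) le_rfl
  have hlim : Tendsto (fun y : ℝ => y ^ k • (tangentialDeriv^[k] v) (0, y)) atTop (𝓝 0) :=
    (tendsto_integral_clm_apply_comp_mul_zero hg_meas hg_le havg hKk).congr'
      ((eventually_gt_atTop 0).mono fun y hy => (hrepr hy).symm)
  have hbound {y : ℝ} (hy : 0 < y) : ‖y ^ k • (tangentialDeriv^[k] v) (0, y)‖
      ≤ (M + ‖α‖) * ∫ s, ‖tangentialDeriv^[k] K (s, 1)‖ :=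
    (congrArg norm (hrepr hy)).trans_le (norm_integral_clm_apply_le hKk fun s => hg_le (y * s))
  exact ⟨fun δ hδ => exists_forall_norm_le_add_div (fun y hy => hbound hy) hlim hδ, hlim⟩

section StokesKernel

/-- The Stokes Poisson kernel of the half-plane without its factor `y₂`, as an operator:
`w ↦ 2 (z · w) z / (π |z|⁴)` for the Euclidean `z · w` and `|z|`. It is homogeneous of degree `-2`,
which gives the integrability of the Poisson kernel. -/
def reducedStokesKernel (z : ℝ × ℝ) : ℝ × ℝ →L[ℝ] ℝ × ℝ :=
  (2 / (π * (z.1 ^ 2 + z.2 ^ 2) ^ 2)) •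
    (z.1 • ContinuousLinearMap.fst ℝ ℝ ℝ + z.2 • ContinuousLinearMap.snd ℝ ℝ ℝ).smulRight z

/-- The Stokes Poisson kernel `Gker` of the half-plane as an operator-valued function of the
point `z = (t, y₂)`. -/
def stokesKernel (z : ℝ × ℝ) : ℝ × ℝ →L[ℝ] ℝ × ℝ :=
  z.2 • reducedStokesKernel z

lemma reducedStokesKernel_apply (z w : ℝ × ℝ) : reducedStokesKernel z w =
    (2 / (π * (z.1 ^ 2 + z.2 ^ 2) ^ 2)) • (z.1 * w.1 + z.2 * w.2) • z :=
  rfl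

lemma stokesKernel_apply (t y : ℝ) (w : ℝ × ℝ) : stokesKernel (t, y) w = Gker t y w := by
  rw [stokesKernel, smul_apply, reducedStokesKernel_apply]
  ext <;> simp only [Gker, Prod.smul_mk, smul_eq_mul] <;> ring

lemma contDiffOn_reducedStokesKernel : ContDiffOn ℝ ∞ reducedStokesKernel {0}ᶜ := by
  refine contDiffOn_clm_apply.2 fun w => ?_
  have hne : ∀ z ∈ ({0}ᶜ : Set (ℝ × ℝ)), π * (z.1 ^ 2 + z.2 ^ 2) ^ 2 ≠ 0 := by
    intro z hz h
    have hsum : z.1 ^ 2 + z.2 ^ 2 = 0 := by simpa [pi_ne_zero] using h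
    obtain ⟨hfst, hsnd⟩ := (add_eq_zero_iff_of_nonneg (sq_nonneg z.1) (sq_nonneg z.2)).1 hsum
    exact hz (Prod.ext (sq_eq_zero_iff.1 hfst) (sq_eq_zero_iff.1 hsnd))
  simp only [reducedStokesKernel_apply]
  fun_prop (disch := assumption)

lemma isHomogeneousKernel_reducedStokesKernel : IsHomogeneousKernel 2 reducedStokesKernel where
  contDiffOn := contDiffOn_reducedStokesKernel
  map_smul r hr z := by
    refine ContinuousLinearMap.ext fun w => ?_
    simp only [smul_apply, reducedStokesKernel_apply, Prod.smul_fst, Prod.smul_snd, smul_eq_mul,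
      smul_smul]
    congr 1
    field_simp

lemma isHomogeneousKernel_stokesKernel : IsHomogeneousKernel 1 stokesKernel :=
  isHomogeneousKernel_reducedStokesKernel.clm_smul (ContinuousLinearMap.snd ℝ ℝ ℝ)

lemma integrable_stokesKernel_mk {y : ℝ} (hy : 0 < y) : Integrable fun t => stokesKernel (t, y) :=
  (isHomogeneousKernel_reducedStokesKernel.integrable_mk le_rfl hy).smul y

end StokesKernel

/-- Decay of tangential derivatives: if `v₀` is bounded measurable and its averages
`(1/y₁)∫₀^{y₁}(v₀(−z) − α) dz` tend to `0` as `|y₁| → ∞`, and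
`v(y) = ∫ G(t,y₂) v₀(y₁−t) dt`, then for every `k ≥ 1` and `δ > 0` there is `C_δ > 0`
with `|y₂^k ∂_{y₁}^k v(0,y₂)| ≤ δ + C_δ/y₂` for all `y₂ > 0`; consequently
`y₂^k ∂_{y₁}^k v(0,y₂) → 0` as `y₂ → ∞`. -/
theorem stmt15 (v₀ : ℝ → ℝ × ℝ) (hmeas : Measurable v₀)
    (hbd : ∃ C : ℝ, ∀ t, ‖v₀ t‖ ≤ C)
    (α : ℝ × ℝ)
    (havg : Tendsto (fun y₁ : ℝ => (1 / y₁) • ∫ z in (0 : ℝ)..y₁, (v₀ (-z) - α))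
      (Filter.atBot ⊔ Filter.atTop) (nhds 0))
    (v : ℝ × ℝ → ℝ × ℝ) (hv : ∀ y : ℝ × ℝ, v y = ∫ t : ℝ, Gker t y.2 (v₀ (y.1 - t)))
    (k : ℕ) (hk : 1 ≤ k) :
    (∀ δ > 0, ∃ C > 0, ∀ y₂ : ℝ, 0 < y₂ →
      ‖y₂ ^ k • (pdOp1^[k] v) (0, y₂)‖ ≤ δ + C / y₂) ∧
    Tendsto (fun y₂ : ℝ => y₂ ^ k • (pdOp1^[k] v) (0, y₂)) atTop (nhds 0) := by
  have hpd : pdOp1 = tangentialDeriv := rfl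
  simpa only [hpd] using stmt15_general isHomogeneousKernel_stokesKernel
    (fun _ => integrable_stokesKernel_mk) hmeas.stronglyMeasurable hbd havg
    (fun y _ => by simpa only [stokesKernel_apply] using hv y) hk
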